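/- Let r, w, y ∈ Z and η, ϑ ∈ E* satisfy w = P_r^J(η), y = P_r^J(ϑ), and ‖ϑ − η‖_*² ≤ L²‖w − r‖² + M² for some constants L, M ≥ 0. Then V(y, w) ≤ (L²/μ²)·V(r, w) + M²/(2μ). -/

import Mathlib

/-!
Minimality of `w` gives slightly more than `Φ w ≤ Φ u` for the objective `Φ` of the prox-mapping:
as `Φ` differs from `ω` by a convex function, `Φ w + V w u ≤ Φ u`. The objectives defining
`w = P_r(η)` and `y = P_r(ϑ)` differ by `(ϑ - η) (· - r)`, so adding this inequality for `w`,
tested at `y`, to the one for `y`, tested at `w`, leaves `V y w + V w y ≤ (ϑ - η) (w - y)`.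
Strong convexity bounds `V w y` below by `μ / 2 * ‖w - y‖ ^ 2`, and Young's inequality absorbs
this term to give `V y w ≤ ‖ϑ - η‖ ^ 2 / (2 * μ)`.
-/

section

variable {E : Type*} [NormedAddCommGroup E] [NormedSpace ℝ E]

theorem nonneg_add_sub_of_isMinOn_add_convexOn {s : Set E} {f g : E → ℝ} {f' : StrongDual ℝ E}
    {x y : E} (hmin : IsMinOn (f + g) s x) (hf : HasFDerivWithinAt f f' s x) (hg : ConvexOn ℝ s g)
    (hx : x ∈ s) (hy : y ∈ s) : 0 ≤ f' (y - x) + (g y - g x) := by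
  -- On the epigraph of `g`, the point `(x, g x)` minimizes the differentiable `(u, a) ↦ f u + a`.
  let epi : Set (E × ℝ) := {p | p.1 ∈ s ∧ g p.1 ≤ p.2}
  have hmin_epi : IsMinOn (fun p : E × ℝ ↦ f p.1 + p.2) epi (x, g x) := fun p hp ↦
    (isMinOn_iff.1 hmin p.1 hp.1).trans (add_le_add_right hp.2 (f p.1))
  have hderiv : HasFDerivWithinAt (fun p : E × ℝ ↦ f p.1 + p.2)
      (f'.comp (.fst ℝ E ℝ) + .snd ℝ E ℝ) epi (x, g x) :=
    (hf.comp (x, g x) hasFDerivWithinAt_fst fun _ hp ↦ hp.1).add hasFDerivWithinAt_snd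
  have hsegment : segment ℝ (x, g x) (y, g y) ⊆ epi :=
    hg.convex_epigraph.segment_subset ⟨hx, le_rfl⟩ ⟨hy, le_rfl⟩
  exact hmin_epi.localize.hasFDerivWithinAt_nonneg hderiv
    (sub_mem_posTangentConeAt_of_segment_subset hsegment)

theorem hasDerivWithinAt_comp_lineMap_zero {F : Type*} [NormedAddCommGroup F] [NormedSpace ℝ F]
    {s : Set E} {f : E → F} {f' : E →L[ℝ] F} {x y : E} (hs : Convex ℝ s)
    (hf : HasFDerivWithinAt f f' s x) (hx : x ∈ s) (hy : y ∈ s) :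
    HasDerivWithinAt (fun t : ℝ ↦ f (AffineMap.lineMap x y t)) (f' (y - x)) (Set.Icc 0 1) 0 :=
  hf.comp_hasDerivWithinAt_of_eq 0 AffineMap.hasDerivWithinAt_lineMap
    (fun _ ht ↦ hs.lineMap_mem hx hy ht) (AffineMap.lineMap_apply_zero x y).symm

theorem apply_sub_le_of_uniformConvexOn {s : Set E} {φ : ℝ → ℝ} {f : E → ℝ}
    {f' : StrongDual ℝ E} {x y : E} (hf : UniformConvexOn s φ f)
    (hf' : HasFDerivWithinAt f f' s x) (hx : x ∈ s) (hy : y ∈ s) :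
    f' (y - x) ≤ f y - f x - φ ‖y - x‖ := by
  let gap : ℝ → ℝ := fun t ↦
    f x + t * (f y - f x) - t * (1 - t) * φ ‖y - x‖ - f (AffineMap.lineMap x y t)
  have hmin : IsMinOn gap (Set.Icc 0 1) 0 := isMinOn_iff.2 fun t ht ↦ by
    have hconv := hf.2 hy hx ht.1 (sub_nonneg.2 ht.2) (add_sub_cancel t 1)
    rw [add_comm, ← AffineMap.lineMap_apply_module] at hconv
    simp only [smul_eq_mul] at hconv
    simp only [gap, AffineMap.lineMap_apply_zero]
    linarith
  have hderiv : HasDerivWithinAt gap (f y - f x - φ ‖y - x‖ - f' (y - x)) (Set.Icc 0 1) 0 := by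
    have hid := hasDerivWithinAt_id (0 : ℝ) (Set.Icc 0 1)
    have hline := hasDerivWithinAt_comp_lineMap_zero hf.1 hf' hx hy
    convert! (((hid.mul_const (f y - f x)).const_add (f x)).sub
      ((hid.mul (hid.const_sub 1)).mul_const (φ ‖y - x‖))).sub hline using 1
    simp
  have hnonneg := hmin.localize.hasFDerivWithinAt_nonneg hderiv.hasFDerivWithinAt
    (sub_mem_posTangentConeAt_of_segment_subset (segment_eq_Icc zero_le_one).subset)
  simpa using hnonneg

/-- The Bregman divergence `V(z, u)` of `ω`, where `ω'` plays the role of the gradient of `ω`: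
the error at `u` of the linearization of `ω` at `z`. -/
def bregmanDiv (ω : E → ℝ) (ω' : E → StrongDual ℝ E) (z u : E) : ℝ :=
  ω u - ω z - ω' z (u - z)

/-- The function of `u` which the prox-mapping `P_z^J(η)` minimizes. -/
def proxObjective (ω : E → ℝ) (ω' : E → StrongDual ℝ E) (J : E → ℝ) (z : E)
    (η : StrongDual ℝ E) (u : E) : ℝ :=
  η (u - z) + bregmanDiv ω ω' z u + J u

/-- The relation `w = P_z^J(η)` between a point and a value of the prox-mapping over `Z`. A
relation avoids choosing a minimizer, which need not exist for general `Z`, `ω` and `J`. -/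
structure IsProxPoint (Z : Set E) (ω : E → ℝ) (ω' : E → StrongDual ℝ E) (J : E → ℝ) (z : E)
    (η : StrongDual ℝ E) (w : E) : Prop where
  mem : w ∈ Z
  isMinOn : IsMinOn (proxObjective ω ω' J z η) Z w

variable {Z : Set E} {ω : E → ℝ} {ω' : E → StrongDual ℝ E} {J : E → ℝ} {μ : ℝ}
  {r u w y z : E} {η ϑ : StrongDual ℝ E}

theorem le_bregmanDiv_of_strongConvexOn (hω : StrongConvexOn Z μ ω)
    (hω' : HasFDerivWithinAt ω (ω' z) Z z) (hz : z ∈ Z) (hu : u ∈ Z) :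
    μ / 2 * ‖u - z‖ ^ 2 ≤ bregmanDiv ω ω' z u :=
  le_sub_comm.1 (apply_sub_le_of_uniformConvexOn hω hω' hz hu)

theorem hasFDerivWithinAt_bregmanDiv (hω' : HasFDerivWithinAt ω (ω' w) Z w) :
    HasFDerivWithinAt (bregmanDiv ω ω' z) (ω' w - ω' z) Z w :=
  (hω'.sub_const (ω z)).sub
    ((ω' z).hasFDerivWithinAt.comp w ((hasFDerivWithinAt_id w Z).sub_const z) (Set.mapsTo_univ _ _))

theorem bregmanDiv_add_bregmanDiv (ω : E → ℝ) (ω' : E → StrongDual ℝ E) (z w u : E) :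
    bregmanDiv ω ω' z w + bregmanDiv ω ω' w u
      = bregmanDiv ω ω' z u - (ω' w - ω' z) (u - w) := by
  simp only [bregmanDiv, sub_apply, map_sub]
  ring

namespace IsProxPoint

theorem proxObjective_add_bregmanDiv_le (hw : IsProxPoint Z ω ω' J z η w)
    (hω' : HasFDerivWithinAt ω (ω' w) Z w) (hJ : ConvexOn ℝ Z J) (hu : u ∈ Z) :
    proxObjective ω ω' J z η w + bregmanDiv ω ω' w u ≤ proxObjective ω ω' J z η u := by
  have hderiv : HasFDerivWithinAt (fun v ↦ η (v - z) + bregmanDiv ω ω' z v)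
      (η + (ω' w - ω' z)) Z w :=
    (η.hasFDerivWithinAt.comp w ((hasFDerivWithinAt_id w Z).sub_const z)
      (Set.mapsTo_univ _ _)).add (hasFDerivWithinAt_bregmanDiv hω')
  have hfirstOrder : 0 ≤ (η + (ω' w - ω' z)) (u - w) + (J u - J w) :=
    nonneg_add_sub_of_isMinOn_add_convexOn hw.isMinOn hderiv hJ hw.mem hu
  have hthreePoint := bregmanDiv_add_bregmanDiv ω ω' z w u
  simp only [proxObjective, add_apply, map_sub] at hfirstOrder hthreePoint ⊢
  linarith

theorem bregmanDiv_add_bregmanDiv_le (hw : IsProxPoint Z ω ω' J r η w)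
    (hy : IsProxPoint Z ω ω' J r ϑ y) (hωw : HasFDerivWithinAt ω (ω' w) Z w)
    (hωy : HasFDerivWithinAt ω (ω' y) Z y) (hJ : ConvexOn ℝ Z J) :
    bregmanDiv ω ω' y w + bregmanDiv ω ω' w y ≤ (ϑ - η) (w - y) := by
  have hwy := hw.proxObjective_add_bregmanDiv_le hωw hJ hy.mem
  have hyw := hy.proxObjective_add_bregmanDiv_le hωy hJ hw.mem
  simp only [proxObjective, sub_apply, map_sub] at hwy hyw ⊢
  linarith

theorem bregmanDiv_le_sq_norm_sub_div (hw : IsProxPoint Z ω ω' J r η w)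
    (hy : IsProxPoint Z ω ω' J r ϑ y) (hμ : 0 < μ) (hω : StrongConvexOn Z μ ω)
    (hωw : HasFDerivWithinAt ω (ω' w) Z w) (hωy : HasFDerivWithinAt ω (ω' y) Z y)
    (hJ : ConvexOn ℝ Z J) : bregmanDiv ω ω' y w ≤ ‖ϑ - η‖ ^ 2 / (2 * μ) := by
  have hsum := hw.bregmanDiv_add_bregmanDiv_le hy hωw hωy hJ
  have hpair : (ϑ - η) (w - y) ≤ ‖ϑ - η‖ * ‖w - y‖ :=
    (le_abs_self _).trans ((ϑ - η).le_opNorm (w - y))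
  have hlower : μ / 2 * ‖w - y‖ ^ 2 ≤ bregmanDiv ω ω' w y :=
    norm_sub_rev w y ▸ le_bregmanDiv_of_strongConvexOn hω hωw hw.mem hy.mem
  have hyoung : ‖ϑ - η‖ * ‖w - y‖ ≤ ‖ϑ - η‖ ^ 2 / (2 * μ) + μ / 2 * ‖w - y‖ ^ 2 := by
    have hsq : ‖ϑ - η‖ ^ 2 / (2 * μ) + μ / 2 * ‖w - y‖ ^ 2 - ‖ϑ - η‖ * ‖w - y‖
        = (‖ϑ - η‖ - μ * ‖w - y‖) ^ 2 / (2 * μ) := by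
      field
    exact sub_nonneg.1 (hsq ▸ by positivity)
  linarith

end IsProxPoint

theorem prox_mapping_bregman_bound_general {L M : ℝ} (hμ : 0 < μ)
    (hω' : ∀ z ∈ Z, HasFDerivWithinAt ω (ω' z) Z z) (hω : StrongConvexOn Z μ ω)
    (hJ : ConvexOn ℝ Z J) (hr : r ∈ Z) (hw : IsProxPoint Z ω ω' J r η w)
    (hy : IsProxPoint Z ω ω' J r ϑ y) (hLM : ‖ϑ - η‖ ^ 2 ≤ L ^ 2 * ‖w - r‖ ^ 2 + M ^ 2) :
    bregmanDiv ω ω' y w ≤ L ^ 2 / μ ^ 2 * bregmanDiv ω ω' r w + M ^ 2 / (2 * μ) :=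
  calc
    bregmanDiv ω ω' y w ≤ ‖ϑ - η‖ ^ 2 / (2 * μ) :=
      hw.bregmanDiv_le_sq_norm_sub_div hy hμ hω (hω' w hw.mem) (hω' y hy.mem) hJ
    _ ≤ (L ^ 2 * ‖w - r‖ ^ 2 + M ^ 2) / (2 * μ) := by gcongr
    _ = L ^ 2 / μ ^ 2 * (μ / 2 * ‖w - r‖ ^ 2) + M ^ 2 / (2 * μ) := by field
    _ ≤ L ^ 2 / μ ^ 2 * bregmanDiv ω ω' r w + M ^ 2 / (2 * μ) := by
      gcongr
      exact le_bregmanDiv_of_strongConvexOn hω (hω' r hr) hr hw.mem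

end

/-- Bregman-distance bound between two prox-mappings from the same center. -/
theorem prox_mapping_bregman_bound
    {E : Type*} [NormedAddCommGroup E] [NormedSpace ℝ E] [FiniteDimensional ℝ E]
    (Z : Set E) (hZne : Z.Nonempty) (hZcl : IsClosed Z) (hZcv : Convex ℝ Z)
    (μ : ℝ) (hμ : 0 < μ)
    (ω : E → ℝ) (Dω : E → E →L[ℝ] ℝ)
    (hωdiff : ∀ z ∈ Z, HasFDerivWithinAt ω (Dω z) Z z)
    (hωcont : ContinuousOn Dω Z)
    (hωsc : StrongConvexOn Z μ ω)
    (V : E → E → ℝ) (hV : ∀ z u, V z u = ω u - ω z - Dω z (u - z))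
    (hVlb : ∀ z ∈ Z, ∀ u ∈ Z, μ / 2 * ‖u - z‖ ^ 2 ≤ V z u)
    (J : E → ℝ) (hJ : ConvexOn ℝ Z J)
    (r w y : E) (hrZ : r ∈ Z) (hwZ : w ∈ Z) (hyZ : y ∈ Z)
    (η ϑ : E →L[ℝ] ℝ) (L M : ℝ) (hL : 0 ≤ L) (hM : 0 ≤ M)
    (hw : IsMinOn (fun u => η (u - r) + V r u + J u) Z w)
    (hy : IsMinOn (fun u => ϑ (u - r) + V r u + J u) Z y)
    (hLM : ‖ϑ - η‖ ^ 2 ≤ L ^ 2 * ‖w - r‖ ^ 2 + M ^ 2) :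
    V y w ≤ L ^ 2 / μ ^ 2 * V r w + M ^ 2 / (2 * μ) := by
  obtain rfl : V = bregmanDiv ω Dω := funext₂ hV
  exact prox_mapping_bregman_bound_general hμ hωdiff hωsc hJ hrZ ⟨hwZ, hw⟩ ⟨hyZ, hy⟩ hLM
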